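/- arXiv:2411.18381 — 6 statements merged into one kernel-verified Lean document; each statement's English description precedes it below -/
import Mathlib

section
/- In a two-machine blocking flow shop with fixed job sequence (with n ≥ 1 jobs and strictly positive processing times a j on M1 and b j on M2), the infimum of the makespan over all blocking-feasible schedules equals the infimum of the makespan over all no-wait blocking-feasible schedules, i.e., the optimal values of the blocking version and the no-wait version of the problem coincide. -/
/-- Blocking-feasible schedule for a two-machine blocking flow shop with fixed job
sequence: `s1 j` / `s2 j` are the start times of job `j` on machines `M1` / `M2`. -/
def BlockingFeasible (n : ℕ) (hn : 1 ≤ n) (a b s1 s2 : Fin n → ℝ) : Prop :=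
  0 ≤ s1 ⟨0, by omega⟩ ∧
  (∀ j : Fin n, s1 j + a j ≤ s2 j) ∧
  (∀ j : Fin n, (h : (j : ℕ) + 1 < n) → s2 j + b j ≤ s2 ⟨(j : ℕ) + 1, h⟩) ∧
  (∀ j : Fin n, (h : (j : ℕ) + 1 < n) → s2 j ≤ s1 ⟨(j : ℕ) + 1, h⟩)

/-- Makespan of a schedule: completion time of the last job on `M2`. -/
def makespan (n : ℕ) (hn : 1 ≤ n) (b s2 : Fin n → ℝ) : ℝ :=
  s2 ⟨n - 1, by omega⟩ + b ⟨n - 1, by omega⟩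

/-- The optimal makespan of the blocking version equals the optimal makespan of
the no-wait version in a two-machine flow shop with fixed job sequence. -/
theorem blocking_inf_eq_noWait_inf
    (n : ℕ) (hn : 1 ≤ n) (a b : Fin n → ℝ)
    (ha : ∀ j, 0 < a j) (hb : ∀ j, 0 < b j) :
    sInf {C : ℝ | ∃ s1 s2 : Fin n → ℝ,
        BlockingFeasible n hn a b s1 s2 ∧ makespan n hn b s2 = C} =
    sInf {C : ℝ | ∃ s1 s2 : Fin n → ℝ,
        BlockingFeasible n hn a b s1 s2 ∧ (∀ j : Fin n, s2 j = s1 j + a j) ∧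
        makespan n hn b s2 = C} := by
  congr 1
  ext C
  constructor
  · rintro ⟨s1, s2, ⟨h0, h1, h2, h3⟩, hC⟩
    refine ⟨fun j => s2 j - a j, s2, ⟨?_, ?_, h2, ?_⟩, ?_, hC⟩
    · have := h1 ⟨0, by omega⟩
      show 0 ≤ s2 ⟨0, by omega⟩ - a ⟨0, by omega⟩
      linarith
    · intro j
      simp
    · intro j h
      have e1 := h3 j h
      have e2 := h1 ⟨(j : ℕ) + 1, h⟩
      show s2 j ≤ s2 ⟨(j : ℕ) + 1, h⟩ - a ⟨(j : ℕ) + 1, h⟩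
      linarith
    · intro j
      simp
  · rintro ⟨s1, s2, hf, _, hC⟩
    exact ⟨s1, s2, hf, hC⟩
end

section
/- In a two-machine blocking flow shop with fixed job sequence (with n ≥ 1 jobs and strictly positive processing times a j on M1 and b j on M2), the minimum makespan over all blocking-feasible schedules is attained and equals a 0 + (∑_{j=1}^{n−1} max(a j, b (j−1))) + b (n−1). -/
/-- The minimum makespan of a two-machine blocking flow shop with fixed job
sequence is attained and equals
`a 0 + ∑_{j=1}^{n-1} max (a j) (b (j-1)) + b (n-1)`. -/
theorem blocking_min_makespan_closedForm
    (n : ℕ) (hn : 1 ≤ n) (a b : Fin n → ℝ)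
    (ha : ∀ j, 0 < a j) (hb : ∀ j, 0 < b j) :
    IsLeast {C : ℝ | ∃ s1 s2 : Fin n → ℝ,
        BlockingFeasible n hn a b s1 s2 ∧ makespan n hn b s2 = C}
      (a ⟨0, by omega⟩ +
        (∑ j : Fin (n - 1),
          max (a ⟨(j : ℕ) + 1, by have := j.isLt; omega⟩)
              (b ⟨(j : ℕ), by have := j.isLt; omega⟩)) +
        b ⟨n - 1, by omega⟩) := by
  obtain ⟨w, hw⟩ : ∃ w : ℕ → ℝ, ∀ i, ∀ h : i + 1 < n,
      w i = max (a ⟨i + 1, h⟩) (b ⟨i, by omega⟩) :=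
    ⟨fun i => if h : i + 1 < n then max (a ⟨i + 1, h⟩) (b ⟨i, by omega⟩) else 0,
      fun i h => by simp [h]⟩
  have hsum : (∑ j : Fin (n - 1),
          max (a ⟨(j : ℕ) + 1, by have := j.isLt; omega⟩)
              (b ⟨(j : ℕ), by have := j.isLt; omega⟩)) = ∑ i ∈ Finset.range (n - 1), w i := by
    rw [Finset.sum_range]
    exact Finset.sum_congr rfl fun j _ => (hw j (by have := j.isLt; omega)).symm
  rw [hsum]
  constructor
  · refine ⟨fun j => a ⟨0, by omega⟩ + ∑ i ∈ Finset.range (j : ℕ), w i - a j,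
      fun j => a ⟨0, by omega⟩ + ∑ i ∈ Finset.range (j : ℕ), w i, ⟨?_, ?_, ?_, ?_⟩, rfl⟩
    · simp
    · intro j
      simp
    · intro j h
      have h1 := hw j h
      have h2 := le_max_right (a ⟨(j : ℕ) + 1, h⟩) (b j)
      simp only [Finset.sum_range_succ, Fin.eta] at h1 ⊢
      linarith
    · intro j h
      have h1 := hw j h
      have h2 := le_max_left (a ⟨(j : ℕ) + 1, h⟩) (b j)
      simp only [Finset.sum_range_succ, Fin.eta] at h1 ⊢
      linarith
  · rintro C ⟨s1, s2, ⟨h0, h1, h2, h3⟩, rfl⟩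
    have key : ∀ k, ∀ h : k < n,
        a ⟨0, by omega⟩ + ∑ i ∈ Finset.range k, w i ≤ s2 ⟨k, h⟩ := by
      intro k
      induction k with
      | zero =>
        intro h
        have := h1 ⟨0, h⟩
        simp only [Finset.range_zero, Finset.sum_empty]
        linarith
      | succ k ih =>
        intro h
        have e0 := ih (by omega)
        have e1 := h2 ⟨k, by omega⟩ h
        have e2 := h3 ⟨k, by omega⟩ h
        have e3 := h1 ⟨k + 1, h⟩
        rw [Finset.sum_range_succ, hw k h]
        have e4 : max (a ⟨k + 1, h⟩) (b ⟨k, by omega⟩) ≤ s2 ⟨k + 1, h⟩ - s2 ⟨k, by omega⟩ :=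
          max_le (by linarith) (by linarith)
        linarith
    have := key (n - 1) (by omega)
    unfold makespan
    linarith
end

section
/- Let n ≥ 1, let L be a nonempty finite type (the set of assignment modes), and let a j, b j : L → ℝ for j = 0,…,n−1. Define g : Fin n → L → ℝ recursively by g 0 l = a 0 l and g (j+1) l' = min over l ∈ L of ( g j l + max(a (j+1) l', b j l) ). Then min over l ∈ L of ( g (n−1) l + b (n−1) l ) equals min over tuples l : Fin n → L of [ a 0 (l 0) + (∑_{j=1}^{n−1} max(a j (l j), b (j−1) (l (j−1)))) + b (n−1) (l (n−1)) ]. (This is the correctness of the layered-graph shortest-path / dynamic-programming computation of the optimal assignment modes for the two-machine blocking flow shop with fixed job sequence.) -/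
/-- Correctness of the layered-graph shortest-path / dynamic-programming
computation of the optimal assignment modes for the two-machine blocking flow
shop with fixed job sequence: with `g` defined recursively by
`g 0 l = a 0 l` and `g (j+1) l' = min_{l} (g j l + max (a (j+1) l') (b j l))`,
the value `min_{l} (g (n-1) l + b (n-1) l)` equals the minimum over all mode
tuples of the closed-form makespan. -/
theorem dp_layered_graph_correct
    {L : Type*} [Fintype L] [Nonempty L]
    (n : ℕ) (hn : 1 ≤ n) (a b : Fin n → L → ℝ)
    (g : Fin n → L → ℝ)
    (hg0 : ∀ l : L, g ⟨0, by omega⟩ l = a ⟨0, by omega⟩ l)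
    (hgs : ∀ (j : Fin n) (h : (j : ℕ) + 1 < n) (l' : L),
      g ⟨(j : ℕ) + 1, h⟩ l' =
        Finset.univ.inf' Finset.univ_nonempty
          (fun l : L => g j l + max (a ⟨(j : ℕ) + 1, h⟩ l') (b j l))) :
    Finset.univ.inf' Finset.univ_nonempty
        (fun l : L => g ⟨n - 1, by omega⟩ l + b ⟨n - 1, by omega⟩ l) =
    Finset.univ.inf' Finset.univ_nonempty
        (fun l : Fin n → L =>
          a ⟨0, by omega⟩ (l ⟨0, by omega⟩) +
          (∑ j : Fin (n - 1),
            max (a ⟨(j : ℕ) + 1, by have := j.isLt; omega⟩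
                    (l ⟨(j : ℕ) + 1, by have := j.isLt; omega⟩))
                (b ⟨(j : ℕ), by have := j.isLt; omega⟩
                    (l ⟨(j : ℕ), by have := j.isLt; omega⟩))) +
          b ⟨n - 1, by omega⟩ (l ⟨n - 1, by omega⟩)) := by
  have lower : ∀ (l : Fin n → L) (k : ℕ) (hk : k < n),
      g ⟨k, hk⟩ (l ⟨k, hk⟩) ≤ a ⟨0, by omega⟩ (l ⟨0, by omega⟩) +
        ∑ j : Fin k, max (a ⟨(j : ℕ) + 1, by have := j.isLt; omega⟩
                    (l ⟨(j : ℕ) + 1, by have := j.isLt; omega⟩))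
                (b ⟨(j : ℕ), by have := j.isLt; omega⟩
                    (l ⟨(j : ℕ), by have := j.isLt; omega⟩)) := by
    intro l k
    induction k with
    | zero => intro hk; simp [hg0]
    | succ k ih =>
      intro hk
      have h1 := ih (by omega)
      rw [Fin.sum_univ_castSucc, hgs ⟨k, by omega⟩ hk]
      refine (Finset.inf'_le _ (Finset.mem_univ (l ⟨k, by omega⟩))).trans ?_
      simp only [Fin.val_castSucc, Fin.val_last]
      linarith
  have upper : ∀ (k : ℕ) (hk : k < n) (x : L), ∃ l : Fin n → L, l ⟨k, hk⟩ = x ∧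
      a ⟨0, by omega⟩ (l ⟨0, by omega⟩) +
        ∑ j : Fin k, max (a ⟨(j : ℕ) + 1, by have := j.isLt; omega⟩
                    (l ⟨(j : ℕ) + 1, by have := j.isLt; omega⟩))
                (b ⟨(j : ℕ), by have := j.isLt; omega⟩
                    (l ⟨(j : ℕ), by have := j.isLt; omega⟩)) = g ⟨k, hk⟩ x := by
    intro k
    induction k with
    | zero => intro hk x; exact ⟨fun _ => x, rfl, by simp [hg0]⟩
    | succ k ih =>
      intro hk x
      obtain ⟨y, -, hy⟩ := Finset.exists_mem_eq_inf' (Finset.univ_nonempty (α := L))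
        (fun l : L => g ⟨k, by omega⟩ l + max (a ⟨k + 1, hk⟩ x) (b ⟨k, by omega⟩ l))
      obtain ⟨l, hl, hs⟩ := ih (by omega) y
      have hne : ∀ (i : ℕ) (hi : i < n), i ≤ k →
          Function.update l ⟨k + 1, hk⟩ x ⟨i, hi⟩ = l ⟨i, hi⟩ := by
        intro i hi hik
        apply Function.update_of_ne
        intro h
        have := congrArg Fin.val h
        simp only at this
        omega
      refine ⟨Function.update l ⟨k + 1, hk⟩ x, Function.update_self _ _ _, ?_⟩
      rw [hgs ⟨k, by omega⟩ hk, hy, Fin.sum_univ_castSucc, ← hs, ← add_assoc]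
      simp only [Fin.val_castSucc, Fin.val_last]
      rw [hne 0 (by omega) (by omega), hne k (by omega) le_rfl, hl, Function.update_self]
      congr 2
      refine Finset.sum_congr rfl fun j _ => ?_
      rw [hne (j + 1) (by omega) (by omega), hne j (by omega) (by omega)]
  apply le_antisymm
  · refine Finset.le_inf' _ _ fun l _ => ?_
    refine (Finset.inf'_le _ (Finset.mem_univ (l ⟨n - 1, by omega⟩))).trans ?_
    have := lower l (n - 1) (by omega)
    linarith
  · refine Finset.le_inf' _ _ fun x _ => ?_
    obtain ⟨l, hl, hs⟩ := upper (n - 1) (by omega) x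
    refine (Finset.inf'_le _ (Finset.mem_univ l)).trans ?_
    rw [hs, hl]
end

section
/- Let m ≥ 1 and let n 1, …, n (m−1) be natural numbers. Then ∏_{k=1}^{m−1} (n k + 1) ≤ binom( (m−1) + ∑_{k=1}^{m−1} n k , m−1 ). (With q = m + ∑_k n k operations per job, this says the number of feasible assignment modes ∏_{k=1}^{m−1}(n k + 1) is at most binom(q−1, m−1).) -/
theorem prod_succ_le_choose_aux (r : ℕ) (n : Fin r → ℕ) :
    (∏ k : Fin r, (n k + 1)) ≤ Nat.choose (r + ∑ k : Fin r, n k) r := by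
  induction r with
  | zero => simp
  | succ r ih =>
    rw [Fin.prod_univ_succ, Fin.sum_univ_succ]
    have h := ih (fun k => n k.succ)
    set S := ∑ k : Fin r, n k.succ
    have e : r + 1 + (n 0 + S) = (r + S) + (n 0 + 1) := by omega
    rw [e, Nat.add_choose_eq]
    have h2 := Finset.single_le_sum
      (f := fun ij : ℕ × ℕ => (r + S).choose ij.1 * (n 0 + 1).choose ij.2)
      (s := Finset.HasAntidiagonal.antidiagonal (r + 1)) (fun _ _ => Nat.zero_le _)
      (a := (r, 1)) (by simp)
    refine le_trans ?_ h2
    simp only [Nat.choose_one_right]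
    rw [mul_comm]
    exact Nat.mul_le_mul_right _ h

/-- The number of feasible assignment modes `∏_{k=1}^{m-1} (n k + 1)` is at most
`binom ((m-1) + ∑_k n k, m-1)`, i.e. `binom (q - 1, m - 1)` where
`q = m + ∑_k n k` is the number of operations per job. -/
theorem card_assignment_modes_le_choose
    (m : ℕ) (hm : 1 ≤ m) (n : Fin (m - 1) → ℕ) :
    (∏ k : Fin (m - 1), (n k + 1)) ≤
      Nat.choose ((m - 1) + ∑ k : Fin (m - 1), n k) (m - 1) := by
  exact prod_succ_le_choose_aux (m - 1) n
end

section
/- Consider an m-machine blocking flow shop with exactly two jobs processed in the fixed order: job 0 before job 1 on every machine, with strictly positive processing times P i k > 0 for job i ∈ {0,1} on machine k ∈ {0,…,m−1}. Then the minimum makespan over all blocking-feasible schedules equals the minimum makespan over all non-blocking-feasible schedules; i.e., with two jobs, the blocking constraint does not change the optimal makespan. -/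
/-- Feasible schedule (without the blocking constraint) for an `m`-machine flow
shop with fixed job sequence: `s j k` is the start time of job `j` on machine `k`. -/
def FlowFeasible (n m : ℕ) (hn : 1 ≤ n) (hm : 1 ≤ m)
    (P : Fin n → Fin m → ℝ) (s : Fin n → Fin m → ℝ) : Prop :=
  (∀ (j : Fin n) (k : Fin m), 0 ≤ s j k) ∧
  (∀ (j : Fin n) (k : Fin m), (h : (k : ℕ) + 1 < m) →
    s j k + P j k ≤ s j ⟨(k : ℕ) + 1, h⟩) ∧
  (∀ (j : Fin n), (h : (j : ℕ) + 1 < n) → ∀ k : Fin m,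
    s j k + P j k ≤ s ⟨(j : ℕ) + 1, h⟩ k)

/-- Blocking-feasible schedule: feasible, and moreover job `j` occupies machine
`k` until it starts on machine `k + 1`. -/
def FlowBlockingFeasible (n m : ℕ) (hn : 1 ≤ n) (hm : 1 ≤ m)
    (P : Fin n → Fin m → ℝ) (s : Fin n → Fin m → ℝ) : Prop :=
  FlowFeasible n m hn hm P s ∧
  (∀ (j : Fin n), (h : (j : ℕ) + 1 < n) → ∀ (k : Fin m), (h' : (k : ℕ) + 1 < m) →
    s j ⟨(k : ℕ) + 1, h'⟩ ≤ s ⟨(j : ℕ) + 1, h⟩ k)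

/-- Makespan: completion time of the last job on the last machine. -/
def flowMakespan (n m : ℕ) (hn : 1 ≤ n) (hm : 1 ≤ m)
    (P : Fin n → Fin m → ℝ) (s : Fin n → Fin m → ℝ) : ℝ :=
  s ⟨n - 1, by omega⟩ ⟨m - 1, by omega⟩ + P ⟨n - 1, by omega⟩ ⟨m - 1, by omega⟩

/-- Earliest start times of job 0. -/
noncomputable def startA (p : ℕ → ℝ) : ℕ → ℝ
  | 0 => 0
  | k + 1 => startA p k + p k

/-- Earliest start times of job 1. -/
noncomputable def startB (p q : ℕ → ℝ) : ℕ → ℝ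
  | 0 => p 0
  | k + 1 => max (startB p q k + q k) (startA p (k + 1) + p (k + 1))

theorem startA_nonneg (p : ℕ → ℝ) (hp : ∀ k, 0 ≤ p k) (k : ℕ) : 0 ≤ startA p k := by
  induction k with
  | zero => simp [startA]
  | succ k ih => simp only [startA]; linarith [hp k]

theorem startA_le_startB (p q : ℕ → ℝ) (k : ℕ) : startA p k + p k ≤ startB p q k := by
  cases k with
  | zero => simp [startA, startB]
  | succ k => simp only [startB]; exact le_max_right _ _

/-- With only two jobs, the blocking constraint is irrelevant: the minimum
makespan over all blocking-feasible schedules is attained and equals the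
minimum makespan over all (non-blocking) feasible schedules. -/
theorem two_jobs_blocking_eq_nonblocking
    (m : ℕ) (hm : 1 ≤ m) (P : Fin 2 → Fin m → ℝ)
    (hP : ∀ j k, 0 < P j k) :
    ∃ C : ℝ,
      IsLeast {C : ℝ | ∃ s : Fin 2 → Fin m → ℝ,
          FlowBlockingFeasible 2 m (by omega) hm P s ∧
          flowMakespan 2 m (by omega) hm P s = C} C ∧
      IsLeast {C : ℝ | ∃ s : Fin 2 → Fin m → ℝ,
          FlowFeasible 2 m (by omega) hm P s ∧
          flowMakespan 2 m (by omega) hm P s = C} C := by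
  classical
  let p : ℕ → ℝ := fun k => if h : k < m then P 0 ⟨k, h⟩ else 0
  let q : ℕ → ℝ := fun k => if h : k < m then P 1 ⟨k, h⟩ else 0
  have hp : ∀ k, 0 ≤ p k := by
    intro k
    by_cases h : k < m
    · simpa [p, h] using (hP 0 ⟨k, h⟩).le
    · simp [p, h]
  have hpk : ∀ k : Fin m, p k = P 0 k := fun k => by simp [p]
  have hqk : ∀ k : Fin m, q k = P 1 k := fun k => by simp [q]
  let s : Fin 2 → Fin m → ℝ := fun j k => if j = 0 then startA p k else startB p q k
  have s0 : ∀ k : Fin m, s 0 k = startA p k := fun k => by simp [s]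
  have s1 : ∀ k : Fin m, s 1 k = startB p q k := fun k => by simp [s]
  have hA := startA_nonneg p hp
  have hAB := startA_le_startB p q
  have hs : FlowBlockingFeasible 2 m (by omega) hm P s := by
    refine ⟨⟨?_, ?_, ?_⟩, ?_⟩
    · intro j k
      fin_cases j
      · change 0 ≤ s 0 k
        rw [s0]; exact hA k
      · change 0 ≤ s 1 k
        rw [s1]; linarith [hA k, hAB k, hp k]
    · intro j k h
      fin_cases j
      · change s 0 k + P 0 k ≤ s 0 _
        rw [s0, s0, ← hpk]; exact le_of_eq rfl
      · change s 1 k + P 1 k ≤ s 1 _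
        rw [s1, s1, ← hqk]; exact le_max_left _ _
    · intro j h k
      obtain rfl : j = 0 := by ext; simp; omega
      change s 0 k + P 0 k ≤ s 1 k
      rw [s0, s1, ← hpk]; exact hAB k
    · intro j h k h'
      obtain rfl : j = 0 := by ext; simp; omega
      change s 0 _ ≤ s 1 k
      rw [s0, s1]; exact hAB k
  have hmin : ∀ t, FlowFeasible 2 m (by omega) hm P t →
      flowMakespan 2 m (by omega) hm P s ≤ flowMakespan 2 m (by omega) hm P t := by
    rintro t ⟨t1, t2, t3⟩
    have h0 : ∀ k (h : k < m), startA p k ≤ t 0 ⟨k, h⟩ := by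
      intro k
      induction k with
      | zero => intro h; exact t1 _ _
      | succ k ih =>
        intro h
        have h1 := ih (by omega)
        have h2 := t2 0 ⟨k, by omega⟩ h
        have h3 := hpk ⟨k, by omega⟩
        simp only [startA] at *
        linarith
    have h13 : ∀ k (h : k < m), startA p k + p k ≤ t 1 ⟨k, h⟩ := by
      intro k h
      have h2 : t 0 ⟨k, h⟩ + P 0 ⟨k, h⟩ ≤ t 1 ⟨k, h⟩ := t3 0 (by simp) ⟨k, h⟩
      have h3 := hpk ⟨k, h⟩
      have h4 := h0 k h
      simp only at h3
      linarith
    have h1 : ∀ k (h : k < m), startB p q k ≤ t 1 ⟨k, h⟩ := by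
      intro k
      induction k with
      | zero => intro h; simpa [startA, startB] using h13 0 h
      | succ k ih =>
        intro h
        have h1 := ih (by omega)
        have h2 := t2 1 ⟨k, by omega⟩ h
        have h3 := hqk ⟨k, by omega⟩
        simp only at h2 h3
        exact max_le (by linarith) (h13 _ h)
    have h5 := h1 (m - 1) (by omega)
    have h6 := s1 ⟨m - 1, by omega⟩
    change s 1 ⟨m - 1, _⟩ + P 1 ⟨m - 1, _⟩ ≤ t 1 ⟨m - 1, _⟩ + P 1 ⟨m - 1, _⟩
    simp only at h6
    linarith
  refine ⟨_, ⟨⟨s, hs, rfl⟩, ?_⟩, ⟨⟨s, hs.1, rfl⟩, ?_⟩⟩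
  · rintro _ ⟨t, ht, rfl⟩
    exact hmin t ht.1
  · rintro _ ⟨t, ht, rfl⟩
    exact hmin t ht
end

section
/- There exist a number of jobs n and strictly positive processing times P j k > 0 for jobs j = 0,…,n−1 on m = 3 machines such that the minimum makespan over all blocking-feasible schedules is strictly smaller than the minimum makespan over all no-wait schedules. Consequently, the property that some optimal blocking schedule has every job's completion time on each machine equal to its starting time on the next machine (which holds for m = 2) fails for m ≥ 3 machines. -/
/-- No-wait schedule: each job starts on machine `k + 1` exactly when it
finishes on machine `k`. -/
def FlowNoWait (n m : ℕ)
    (P : Fin n → Fin m → ℝ) (s : Fin n → Fin m → ℝ) : Prop :=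
  ∀ (j : Fin n) (k : Fin m), (h : (k : ℕ) + 1 < m) →
    s j ⟨(k : ℕ) + 1, h⟩ = s j k + P j k

/-- For `m = 3` machines there is an instance where the optimal blocking
makespan is strictly smaller than the optimal no-wait makespan; hence for
`m ≥ 3` no optimal blocking schedule need be no-wait (unlike the `m = 2` case). -/
theorem blocking_lt_noWait_three_machines :
    ∃ (n : ℕ) (hn : 1 ≤ n) (P : Fin n → Fin 3 → ℝ),
      (∀ j k, 0 < P j k) ∧
      ∃ Cb Cnw : ℝ,
        IsLeast {C : ℝ | ∃ s : Fin n → Fin 3 → ℝ,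
            FlowBlockingFeasible n 3 hn (by omega) P s ∧
            flowMakespan n 3 hn (by omega) P s = C} Cb ∧
        IsLeast {C : ℝ | ∃ s : Fin n → Fin 3 → ℝ,
            FlowBlockingFeasible n 3 hn (by omega) P s ∧
            FlowNoWait n 3 P s ∧
            flowMakespan n 3 hn (by omega) P s = C} Cnw ∧
        Cb < Cnw := by
  refine ⟨3, by omega, ![![1,1,5],![1,1,1],![5,1,1]], ?_, 9, 13, ⟨?_, ?_⟩, ⟨?_, ?_⟩, by norm_num⟩
  · intro j k
    fin_cases j <;> fin_cases k <;> norm_num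
  · refine ⟨![![0,1,2],![1,2,7],![2,7,8]], ⟨⟨?_, ?_, ?_⟩, ?_⟩, ?_⟩
    · intro j k
      fin_cases j <;> fin_cases k <;> norm_num
    · intro j k h
      fin_cases j <;> fin_cases k <;> first | (exfalso; revert h; decide) | norm_num
    · intro j h k
      fin_cases j <;> fin_cases k <;> first | (exfalso; revert h; decide) | norm_num
    · intro j h k h'
      fin_cases j <;> fin_cases k <;>
        first | (exfalso; revert h; decide) | (exfalso; revert h'; decide) | norm_num
    · norm_num [flowMakespan]
  · rintro C ⟨s, ⟨⟨h0, h1, h2⟩, h3⟩, rfl⟩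
    have a := h0 0 0
    have b := h1 0 0 (by decide)
    have c := h1 0 1 (by decide)
    have d := h2 0 (by decide) 2
    have e := h3 1 (by decide) 1 (by decide)
    have f := h1 2 1 (by decide)
    simp [flowMakespan] at a b c d e f ⊢
    linarith
  · refine ⟨![![0,1,2],![5,6,7],![6,11,12]], ⟨⟨?_, ?_, ?_⟩, ?_⟩, ?_, ?_⟩
    · intro j k
      fin_cases j <;> fin_cases k <;> norm_num
    · intro j k h
      fin_cases j <;> fin_cases k <;> first | (exfalso; revert h; decide) | norm_num
    · intro j h k
      fin_cases j <;> fin_cases k <;> first | (exfalso; revert h; decide) | norm_num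
    · intro j h k h'
      fin_cases j <;> fin_cases k <;>
        first | (exfalso; revert h; decide) | (exfalso; revert h'; decide) | norm_num
    · intro j k h
      fin_cases j <;> fin_cases k <;> first | (exfalso; revert h; decide) | norm_num
    · norm_num [flowMakespan]
  · rintro C ⟨s, ⟨⟨h0, h1, h2⟩, h3⟩, hw, rfl⟩
    have a := h0 0 0
    have b := h1 0 0 (by decide)
    have c := h1 0 1 (by decide)
    have d := h2 0 (by decide) 2
    have e := hw 1 0 (by decide)
    have e' := hw 1 1 (by decide)
    have g := h2 1 (by decide) 0
    have f := h1 2 0 (by decide)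
    have f' := h1 2 1 (by decide)
    simp [flowMakespan] at a b c d e e' g f f' ⊢
    linarith
end
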